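/- Let u ∈ C²(closed 𝔻) be a solution of (P_ε). Then for every C¹ vector field F : closed 𝔻 → ℝ² the following Pohozaev-type identity holds: ∫_{∂𝔻} [ 2K_ε(x)e^{u}(F·ν) + (2h_ε(x)e^{u/2} − 2h̃_ε)(∇u·F) − ½|∇u|²(F·ν) ] = ∫_𝔻 [ 2K̃_ε ∇u·F + 2e^{u}(∇K_ε·F + K_ε ∇·F) + DF(∇u,∇u) − ½(∇·F)|∇u|² ], where DF(∇u,∇u) = Σ_{i,j} (∂F_i/∂x_j)(∂u/∂x_i)(∂u/∂x_j) and ∇·F is the divergence of F. -/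

import Mathlib

open MeasureTheory Real Filter

noncomputable section

/-- The open unit disk in ℝ² ≅ ℂ. -/
def unitDisk : Set ℂ := Metric.ball 0 1

/-- The unit circle ∂𝔻. -/
def unitCircle : Set ℂ := Metric.sphere 0 1

/-- The closed unit disk. -/
def closedUnitDisk : Set ℂ := Metric.closedBall 0 1

/-- Directional derivative of `u` at `x` in direction `v`. -/
def pd (u : ℂ → ℝ) (v x : ℂ) : ℝ := fderiv ℝ u x v

/-- Laplacian of `u` at `x`. -/
def lap (u : ℂ → ℝ) (x : ℂ) : ℝ :=
  fderiv ℝ (fun y => pd u 1 y) x 1 + fderiv ℝ (fun y => pd u Complex.I y) x Complex.I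

/-- Squared norm of the gradient, |∇u|². -/
def gradSq (u : ℂ → ℝ) (x : ℂ) : ℝ := pd u 1 x ^ 2 + pd u Complex.I x ^ 2

/-- Outward normal derivative ∂_ν u(x) = ∇u(x)·x at a boundary point. -/
def nderiv (u : ℂ → ℝ) (x : ℂ) : ℝ := x.re * pd u 1 x + x.im * pd u Complex.I x

/-- Tangential derivative ∂_τ u(x) = ∇u(x)·(−x₂,x₁) at a boundary point. -/
def tderiv (u : ℂ → ℝ) (x : ℂ) : ℝ := -x.im * pd u 1 x + x.re * pd u Complex.I x

/-- Unit-speed parametrization of the unit circle. -/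
def bpt (θ : ℝ) : ℂ := Complex.exp ((θ : ℂ) * Complex.I)

/-- Integral over ∂𝔻 with respect to arclength. -/
def bint (f : ℂ → ℝ) : ℝ := ∫ θ in (0:ℝ)..(2 * π), f (bpt θ)

/-- A solution of the prescribed curvature problem for `(K, h)`. -/
def IsSolution (K h u : ℂ → ℝ) : Prop :=
  ContDiff ℝ 2 u ∧
  (∀ x ∈ unitDisk, -lap u x = 2 * K x * Real.exp (u x)) ∧
  (∀ x ∈ unitCircle, nderiv u x + 2 = 2 * h x * Real.exp (u x / 2))

/-- The auxiliary function Φ = H + √(H² + K). -/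
def Phi (K H : ℂ → ℝ) (x : ℂ) : ℝ := H x + Real.sqrt (H x ^ 2 + K x)

/-- `H` is the harmonic extension of `h`, C¹ up to the boundary. -/
def IsHarmExt (h H : ℂ → ℝ) : Prop :=
  ContDiff ℝ 1 H ∧ ContDiffOn ℝ 2 H unitDisk ∧
  (∀ x ∈ unitDisk, lap H x = 0) ∧ ∀ x ∈ unitCircle, H x = h x

/-- K_ε. -/
def Keps (K : ℂ → ℝ) (ε : ℝ) (x : ℂ) : ℝ := (K x - ε / 2) / (1 + ε)

/-- h_ε. -/
def heps (h : ℂ → ℝ) (ε : ℝ) (x : ℂ) : ℝ := h x / (1 + ε)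

/-- K̃_ε. -/
def Ktil (ε : ℝ) : ℝ := -ε / (2 * (1 + ε))

/-- h̃_ε. -/
def htil (ε : ℝ) : ℝ := 1 / (1 + ε)

/-- A solution of the perturbed problem (P_ε). -/
def IsPerturbedSolution (K h : ℂ → ℝ) (ε : ℝ) (u : ℂ → ℝ) : Prop :=
  ContDiff ℝ 2 u ∧
  (∀ x ∈ unitDisk, -lap u x + 2 * Ktil ε = 2 * Keps K ε x * Real.exp (u x)) ∧
  (∀ x ∈ unitCircle, nderiv u x + 2 * htil ε = 2 * heps h ε x * Real.exp (u x / 2))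

/-- The energy functional I. -/
def Ifun (K h u : ℂ → ℝ) : ℝ :=
  (∫ x in unitDisk, ((1/2) * gradSq u x - 2 * K x * Real.exp (u x))) +
  bint (fun x => 2 * u x - 4 * h x * Real.exp (u x / 2))

/-- The perturbation term T. -/
def Tfun (u : ℂ → ℝ) : ℝ :=
  ∫ x in unitDisk, ((1/2) * gradSq u x + Real.exp (u x) - u x)

/-- The perturbed functional I_ε. -/
def Ieps (K h : ℂ → ℝ) (ε : ℝ) (u : ℂ → ℝ) : ℝ := (Ifun K h u + ε * Tfun u) / (1 + ε)

/-- Euclidean dot product on ℝ² ≅ ℂ. -/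
def dotC (a b : ℂ) : ℝ := a.re * b.re + a.im * b.im

/-- The gradient of `u` at `x`, as a point of ℝ² ≅ ℂ. -/
def gradC (u : ℂ → ℝ) (x : ℂ) : ℂ := (⟨pd u 1 x, pd u Complex.I x⟩ : ℂ)

/-- Divergence of a vector field F : ℝ² → ℝ². -/
def divC (F : ℂ → ℂ) (x : ℂ) : ℝ := (fderiv ℝ F x 1).re + (fderiv ℝ F x Complex.I).im

/-!
Apply the divergence theorem on the disk to the vector field
`X = (∇u·F)∇u - ½|∇u|²F + 2keᵘF`. Both of its first two summands contribute `D²u(∇u, F)` to `div X`,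
with opposite signs because the Hessian is symmetric, so the only second-order term left is
`(Δu)(∇u·F)`. The equation makes it `(2κ - 2keᵘ)(∇u·F)`, and the derivative of `eᵘ` in the third
summand cancels the part with `eᵘ`. On the circle, `X·ν` involves `∂_ν u` only as a factor of
`∇u·F`, and there the boundary condition applies.

The divergence theorem on the disk is Green's theorem on the rectangle of polar coordinates, by
`r div F = ∂_r (r F·ν) + ∂_θ (F·τ)`.
-/

open scoped Gradient InnerProductSpace

/-- The divergence of a vector field, encoded as the trace of its derivative so that it
makes sense without coordinates; it is `0` in infinite dimension, where the trace is. -/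
def divergence {E : Type*} [NormedAddCommGroup E] [NormedSpace ℝ E] (F : E → E) (x : E) : ℝ :=
  LinearMap.trace ℝ E (fderiv ℝ F x)

section Divergence

variable {E : Type*} [NormedAddCommGroup E] [NormedSpace ℝ E] {F G : E → E} {φ : E → ℝ} {x : E}

lemma divergence_add (hF : DifferentiableAt ℝ F x) (hG : DifferentiableAt ℝ G x) :
    divergence (fun y => F y + G y) x = divergence F x + divergence G x := by
  simp only [divergence, fderiv_fun_add hF hG, ContinuousLinearMap.toLinearMap_add, map_add]

variable [FiniteDimensional ℝ E]

lemma divergence_smul (hφ : DifferentiableAt ℝ φ x) (hF : DifferentiableAt ℝ F x) :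
    divergence (fun y => φ y • F y) x = φ x * divergence F x + fderiv ℝ φ x (F x) := by
  simp only [divergence, fderiv_fun_smul hφ hF, ContinuousLinearMap.toLinearMap_add, map_add,
    ContinuousLinearMap.toLinearMap_smul, map_smul, smul_eq_mul]
  congr 1
  exact LinearMap.trace_smulRight (fderiv ℝ φ x : E →ₗ[ℝ] ℝ) (F x)

lemma continuous_divergence (hF : ContDiff ℝ 1 F) : Continuous (divergence F) :=
  (LinearMap.trace ℝ E ∘ₗ ContinuousLinearMap.coeLM ℝ).continuous_of_finiteDimensional.comp
    (hF.continuous_fderiv one_ne_zero)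

end Divergence

section Gradient

variable {E : Type*} [NormedAddCommGroup E] [InnerProductSpace ℝ E] [CompleteSpace E]
  {u : E → ℝ} {x : E}

lemma contDiffAt_gradient {m n : WithTop ℕ∞} (hu : ContDiffAt ℝ n u x) (hmn : m + 1 ≤ n) :
    ContDiffAt ℝ m (∇ u) x :=
  (InnerProductSpace.toDual ℝ E).symm.contDiff.contDiffAt.comp x (hu.fderiv_right hmn)

lemma differentiableAt_gradient (hu : ContDiffAt ℝ 2 u x) : DifferentiableAt ℝ (∇ u) x :=
  (contDiffAt_gradient (m := 1) hu one_add_one_eq_two.le).differentiableAt one_ne_zero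

lemma inner_fderiv_gradient_left (v w : E) :
    ⟪fderiv ℝ (∇ u) x v, w⟫_ℝ = fderiv ℝ (fderiv ℝ u) x v w := by
  have h : ∇ u = (InnerProductSpace.toDual ℝ E).symm ∘ fderiv ℝ u := rfl
  rw [h, LinearIsometryEquiv.comp_fderiv]
  exact InnerProductSpace.toDual_symm_apply

lemma inner_fderiv_gradient_comm (hu : ContDiffAt ℝ 2 u x) (v w : E) :
    ⟪fderiv ℝ (∇ u) x v, w⟫_ℝ = ⟪fderiv ℝ (∇ u) x w, v⟫_ℝ := by
  rw [inner_fderiv_gradient_left, inner_fderiv_gradient_left]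
  exact hu.isSymmSndFDerivAt (by simp) v w

lemma hasFDerivAt_norm_gradient_sq_div_two (hu : ContDiffAt ℝ 2 u x) :
    HasFDerivAt (fun y => ‖∇ u y‖ ^ 2 / 2) (innerSL ℝ (fderiv ℝ (∇ u) x (∇ u x))) x := by
  have hsq := (differentiableAt_gradient hu).hasFDerivAt.norm_sq.mul_const 2⁻¹
  simp only [← div_eq_mul_inv] at hsq
  refine hsq.congr_fderiv ?_
  ext v
  simp [inner_fderiv_gradient_comm hu (∇ u x), real_inner_comm (∇ u x)]

end Gradient

section PohozaevField

variable {E : Type*} [NormedAddCommGroup E] [InnerProductSpace ℝ E]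

/-- The vector field `(∇u·F)∇u + (φ - |∇u|²/2)F`, whose flux and divergence are the two sides of
Pohozaev-type identities; `φ` is the potential term. -/
def pohozaevField [CompleteSpace E] (u φ : E → ℝ) (F : E → E) (x : E) : E :=
  ⟪∇ u x, F x⟫_ℝ • ∇ u x + (φ x - ‖∇ u x‖ ^ 2 / 2) • F x

variable {u φ : E → ℝ} {F : E → E}

lemma contDiff_pohozaevField [CompleteSpace E] (hu : ContDiff ℝ 2 u) (hφ : ContDiff ℝ 1 φ)
    (hF : ContDiff ℝ 1 F) : ContDiff ℝ 1 (pohozaevField u φ F) := by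
  have hgrad : ContDiff ℝ 1 (∇ u) := contDiff_iff_contDiffAt.2 fun x =>
    contDiffAt_gradient hu.contDiffAt one_add_one_eq_two.le
  exact ((hgrad.inner ℝ hF).smul hgrad).add ((hφ.sub ((hgrad.norm_sq ℝ).div_const 2)).smul hF)

theorem divergence_pohozaevField [FiniteDimensional ℝ E] {x : E} (hu : ContDiffAt ℝ 2 u x)
    (hφ : DifferentiableAt ℝ φ x) (hF : DifferentiableAt ℝ F x) :
    divergence (pohozaevField u φ F) x =
      divergence (∇ u) x * ⟪∇ u x, F x⟫_ℝ + fderiv ℝ φ x (F x) + φ x * divergence F x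
        + ⟪fderiv ℝ F x (∇ u x), ∇ u x⟫_ℝ - divergence F x * ‖∇ u x‖ ^ 2 / 2 := by
  have hgrad : DifferentiableAt ℝ (∇ u) x := differentiableAt_gradient hu
  have hinner : DifferentiableAt ℝ (fun y => ⟪∇ u y, F y⟫_ℝ) x := hgrad.inner ℝ hF
  have hfderiv_inner : fderiv ℝ (fun y => ⟪∇ u y, F y⟫_ℝ) x (∇ u x) =
      ⟪fderiv ℝ F x (∇ u x), ∇ u x⟫_ℝ + ⟪fderiv ℝ (∇ u) x (∇ u x), F x⟫_ℝ := by
    rw [fderiv_inner_apply ℝ hgrad hF, real_inner_comm (fderiv ℝ F x _)]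
  have hcoeff := hφ.hasFDerivAt.fun_sub (hasFDerivAt_norm_gradient_sq_div_two hu)
  unfold pohozaevField
  rw [divergence_add (hinner.fun_smul hgrad) (hcoeff.differentiableAt.fun_smul hF),
    divergence_smul hinner hgrad, divergence_smul hcoeff.differentiableAt hF, hfderiv_inner,
    hcoeff.fderiv, sub_apply, innerSL_apply_apply]
  ring

end PohozaevField

section Polar

lemma add_polarCoord_symm_eq_circleMap (c : ℂ) (p : ℝ × ℝ) :
    c + Complex.polarCoord.symm p = circleMap c p.1 p.2 := by
  simp [circleMap, Complex.exp_mul_I, Complex.polarCoord_symm_apply]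

lemma setIntegral_ball_eq_setIntegral_circleMap {V : Type*} [NormedAddCommGroup V]
    [NormedSpace ℝ V] (c : ℂ) (R : ℝ) (f : ℂ → V) :
    ∫ z in Metric.ball c R, f z =
      ∫ p in Set.Ioo 0 R ×ˢ Set.Ioo (-π) π, p.1 • f (circleMap c p.1 p.2) := by
  have hmem {p : ℝ × ℝ} (hp : p ∈ polarCoord.target) :
      circleMap c p.1 p.2 ∈ Metric.ball c R ↔ p.1 < R := by
    rw [mem_ball_iff_norm, circleMap_sub_center, norm_circleMap_zero, abs_of_pos hp.1]
  have hinter : polarCoord.target ∩ {p | p.1 < R} = Set.Ioo 0 R ×ˢ Set.Ioo (-π) π := by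
    ext p
    simp only [polarCoord_target, Set.mem_inter_iff, Set.mem_prod, Set.mem_Ioi, Set.mem_Ioo,
      Set.mem_ofPred_eq]
    tauto
  calc ∫ z in Metric.ball c R, f z
      = ∫ z, (Metric.ball c R).indicator f (c + z) := by
        rw [integral_add_left_eq_self, integral_indicator measurableSet_ball]
    _ = ∫ p in polarCoord.target,
          p.1 • (Metric.ball c R).indicator f (circleMap c p.1 p.2) := by
        simp only [← Complex.integral_comp_polarCoord_symm, add_polarCoord_symm_eq_circleMap]
    _ = ∫ p in polarCoord.target,
          {p : ℝ × ℝ | p.1 < R}.indicator (fun p => p.1 • f (circleMap c p.1 p.2)) p := by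
        refine setIntegral_congr_fun polarCoord.open_target.measurableSet fun p hp => ?_
        by_cases hpR : p.1 < R <;> simp [hpR, hmem hp]
    _ = ∫ p in Set.Ioo 0 R ×ˢ Set.Ioo (-π) π, p.1 • f (circleMap c p.1 p.2) := by
        rw [setIntegral_indicator (measurableSet_lt measurable_fst measurable_const), hinter]

lemma contDiff_circleMap_uncurry {n : WithTop ℕ∞} (c : ℂ) :
    ContDiff ℝ n fun p : ℝ × ℝ => circleMap c p.1 p.2 := by
  have hradius : ContDiff ℝ n fun p : ℝ × ℝ => (p.1 : ℂ) :=
    Complex.ofRealCLM.contDiff.comp contDiff_fst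
  have hangle : ContDiff ℝ n fun p : ℝ × ℝ => (p.2 : ℂ) :=
    Complex.ofRealCLM.contDiff.comp contDiff_snd
  exact contDiff_const.add (hradius.mul (hangle.mul contDiff_const).cexp)

lemma setIntegral_ball_eq_intervalIntegral_circleMap {V : Type*} [NormedAddCommGroup V]
    [NormedSpace ℝ V] {c : ℂ} {R : ℝ} (hR : 0 ≤ R) {f : ℂ → V}
    (hf : ContinuousOn f (Metric.closedBall c R)) :
    ∫ z in Metric.ball c R, f z =
      ∫ r in 0..R, ∫ θ in -π..π, r • f (circleMap c r θ) := by
  have hmaps : Set.MapsTo (fun p : ℝ × ℝ => circleMap c p.1 p.2)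
      (Set.Icc 0 R ×ˢ Set.Icc (-π) π) (Metric.closedBall c R) := fun p hp =>
    Metric.closedBall_subset_closedBall hp.1.2 (circleMap_mem_closedBall c hp.1.1 p.2)
  have hcont : ContinuousOn (fun p : ℝ × ℝ => p.1 • f (circleMap c p.1 p.2))
      (Set.Icc 0 R ×ˢ Set.Icc (-π) π) :=
    continuousOn_fst.smul
      (hf.comp (contDiff_circleMap_uncurry (n := 0) c).continuous.continuousOn hmaps)
  have hint : IntegrableOn (fun p : ℝ × ℝ => p.1 • f (circleMap c p.1 p.2))
      (Set.Ioo 0 R ×ˢ Set.Ioo (-π) π) :=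
    (hcont.integrableOn_compact (isCompact_Icc.prod isCompact_Icc)).mono_set
      (Set.prod_mono Set.Ioo_subset_Icc_self Set.Ioo_subset_Icc_self)
  rw [setIntegral_ball_eq_setIntegral_circleMap, Measure.volume_eq_prod, setIntegral_prod _ hint]
  simp only [intervalIntegral.integral_of_le hR, integral_Ioc_eq_integral_Ioo,
    intervalIntegral.integral_of_le (neg_le_self pi_pos.le)]

lemma hasFDerivAt_circleMap_uncurry (c : ℂ) (p : ℝ × ℝ) :
    HasFDerivAt (fun q : ℝ × ℝ => circleMap c q.1 q.2)
      ((ContinuousLinearMap.toSpanSingleton ℝ (circleMap 0 1 p.2)).coprod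
        (ContinuousLinearMap.toSpanSingleton ℝ (circleMap 0 p.1 p.2 * Complex.I))) p := by
  have hradius : HasFDerivAt (fun q : ℝ × ℝ => (q.1 : ℂ))
      (Complex.ofRealCLM.comp (ContinuousLinearMap.fst ℝ ℝ ℝ)) p :=
    Complex.ofRealCLM.hasFDerivAt.comp p hasFDerivAt_fst
  have hangle : HasFDerivAt (fun q : ℝ × ℝ => circleMap 0 1 q.2)
      (.comp (.toSpanSingleton ℝ (circleMap 0 1 p.2 * Complex.I)) (.snd ℝ ℝ ℝ)) p :=
    (hasDerivAt_circleMap 0 1 p.2).hasFDerivAt.comp p hasFDerivAt_snd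
  refine (((hradius.mul hangle).const_add c).congr_of_eventuallyEq ?_).congr_fderiv ?_
  · exact .of_forall fun q => by simp [circleMap]
  · ext <;> simp [circleMap, mul_assoc]

lemma trace_eq_inner_add_inner_mul_I (A : ℂ →ₗ[ℝ] ℂ) {e : ℂ} (he : ‖e‖ = 1) :
    LinearMap.trace ℝ ℂ A = ⟪A e, e⟫_ℝ + ⟪A (e * Complex.I), e * Complex.I⟫_ℝ := by
  obtain ⟨e, rfl⟩ : ∃ e' : Circle, (e' : ℂ) = e := ⟨⟨e, mem_sphere_zero_iff_norm.2 he⟩, rfl⟩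
  rw [A.trace_eq_sum_inner (Complex.orthonormalBasisOneI.map (rotation e))]
  simp [Fin.sum_univ_two, real_inner_comm, -Complex.inner]

/-- `r` times the radial component of `F` at the point with polar coordinates `p = (r, θ)` about
`c`: the flux density of `F` through the circle of radius `r` with respect to `dθ`. -/
def radialFlux (c : ℂ) (F : ℂ → ℂ) (p : ℝ × ℝ) : ℝ :=
  ⟪F (circleMap c p.1 p.2), circleMap 0 p.1 p.2⟫_ℝ

/-- The angular component of `F` at the point with polar coordinates `p = (r, θ)` about `c`: the
flux density of `F` through the ray of angle `θ` with respect to `dr`. -/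
def angularFlux (c : ℂ) (F : ℂ → ℂ) (p : ℝ × ℝ) : ℝ :=
  ⟪F (circleMap c p.1 p.2), circleMap 0 1 p.2 * Complex.I⟫_ℝ

variable {c : ℂ} {F : ℂ → ℂ}

lemma contDiff_radialFlux {n : WithTop ℕ∞} (hF : ContDiff ℝ n F) :
    ContDiff ℝ n (radialFlux c F) :=
  (hF.comp (contDiff_circleMap_uncurry c)).inner ℝ (contDiff_circleMap_uncurry 0)

lemma contDiff_angularFlux {n : WithTop ℕ∞} (hF : ContDiff ℝ n F) :
    ContDiff ℝ n (angularFlux c F) :=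
  (hF.comp (contDiff_circleMap_uncurry c)).inner ℝ
    (((contDiff_circleMap 0 1).comp contDiff_snd).mul contDiff_const)

lemma fderiv_radialFlux_apply_radial {r θ : ℝ} (hF : DifferentiableAt ℝ F (circleMap c r θ)) :
    fderiv ℝ (radialFlux c F) (r, θ) (1, 0) =
      ⟪F (circleMap c r θ), circleMap 0 1 θ⟫_ℝ
        + r * ⟪fderiv ℝ F (circleMap c r θ) (circleMap 0 1 θ), circleMap 0 1 θ⟫_ℝ := by
  have hFz := hF.hasFDerivAt.comp (r, θ) (hasFDerivAt_circleMap_uncurry c (r, θ))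
  have h := hFz.inner ℝ (hasFDerivAt_circleMap_uncurry 0 (r, θ))
  have hz : circleMap 0 r θ = r • circleMap 0 1 θ := by simp [circleMap]
  refine (DFunLike.congr_fun h.fderiv (1, 0)).trans ?_
  simp [fderivInnerCLM_apply, hz, -Complex.real_smul, real_inner_smul_right]

lemma fderiv_angularFlux_apply_angular {r θ : ℝ} (hF : DifferentiableAt ℝ F (circleMap c r θ)) :
    fderiv ℝ (angularFlux c F) (r, θ) (0, 1) =
      -⟪F (circleMap c r θ), circleMap 0 1 θ⟫_ℝ
        + r * ⟪fderiv ℝ F (circleMap c r θ) (circleMap 0 1 θ * Complex.I),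
            circleMap 0 1 θ * Complex.I⟫_ℝ := by
  have hFz := hF.hasFDerivAt.comp (r, θ) (hasFDerivAt_circleMap_uncurry c (r, θ))
  have htangent := ((hasDerivAt_circleMap 0 1 θ).mul_const Complex.I).hasFDerivAt.comp (r, θ)
    (hasFDerivAt_snd (𝕜 := ℝ))
  have hz : circleMap 0 r θ * Complex.I = r • (circleMap 0 1 θ * Complex.I) := by
    simp [circleMap, mul_assoc]
  have h := hFz.inner ℝ htangent
  refine (DFunLike.congr_fun h.fderiv (0, 1)).trans ?_
  simp [fderivInnerCLM_apply, hz, -Complex.real_smul, real_inner_smul_left, mul_assoc]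

lemma fderiv_radialFlux_add_fderiv_angularFlux {r θ : ℝ}
    (hF : DifferentiableAt ℝ F (circleMap c r θ)) :
    fderiv ℝ (radialFlux c F) (r, θ) (1, 0) + fderiv ℝ (angularFlux c F) (r, θ) (0, 1) =
      r * divergence F (circleMap c r θ) := by
  rw [fderiv_radialFlux_apply_radial hF, fderiv_angularFlux_apply_angular hF, divergence,
    trace_eq_inner_add_inner_mul_I _ (e := circleMap 0 1 θ) (by simp)]
  simp only [ContinuousLinearMap.coe_coe]
  ring

lemma radialFlux_periodic (r : ℝ) : Function.Periodic (fun θ => radialFlux c F (r, θ)) (2 * π) :=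
  fun θ => by simp only [radialFlux, periodic_circleMap _ _ θ]

lemma angularFlux_periodic (r : ℝ) :
    Function.Periodic (fun θ => angularFlux c F (r, θ)) (2 * π) :=
  fun θ => by simp only [angularFlux, periodic_circleMap _ _ θ]

lemma intervalIntegral_mul_divergence_circleMap (R : ℝ) (hF : ContDiff ℝ 1 F) :
    ∫ r in 0..R, ∫ θ in -π..π, r * divergence F (circleMap c r θ) =
      ∫ θ in -π..π, radialFlux c F (R, θ) := by
  have hrad : ContDiff ℝ 1 (radialFlux c F) := contDiff_radialFlux hF
  have hang : ContDiff ℝ 1 (angularFlux c F) := contDiff_angularFlux hF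
  have hcont : Continuous fun p : ℝ × ℝ =>
      fderiv ℝ (radialFlux c F) p (1, 0) + fderiv ℝ (angularFlux c F) p (0, 1) :=
    ((hrad.continuous_fderiv one_ne_zero).clm_apply continuous_const).add
      ((hang.continuous_fderiv one_ne_zero).clm_apply continuous_const)
  have hseam (r : ℝ) : angularFlux c F (r, π) = angularFlux c F (r, -π) := by
    have h := angularFlux_periodic (c := c) (F := F) r (-π)
    rwa [show -π + 2 * π = π by ring] at h
  have hcentre (θ : ℝ) : radialFlux c F (0, θ) = 0 := by simp [radialFlux]
  have hgreen := integral2_divergence_prod_of_hasFDerivAt (radialFlux c F) (angularFlux c F)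
    _ _ 0 (-π) R π hrad.continuous.continuousOn hang.continuous.continuousOn
    (fun p _ => (hrad.differentiable one_ne_zero p).hasFDerivAt)
    (fun p _ => (hang.differentiable one_ne_zero p).hasFDerivAt)
    (hcont.continuousOn.integrableOn_compact (isCompact_uIcc.prod isCompact_uIcc))
  simpa only [fderiv_radialFlux_add_fderiv_angularFlux (hF.differentiable one_ne_zero _),
    hseam, hcentre, sub_self, zero_add, intervalIntegral.integral_zero, sub_zero] using hgreen

theorem setIntegral_ball_divergence {R : ℝ} (hR : 0 ≤ R) (hF : ContDiff ℝ 1 F) :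
    ∫ z in Metric.ball c R, divergence F z =
      ∫ θ in 0..2 * π, ⟪F (circleMap c R θ), circleMap 0 R θ⟫_ℝ := by
  calc ∫ z in Metric.ball c R, divergence F z
      = ∫ r in 0..R, ∫ θ in -π..π, r * divergence F (circleMap c r θ) :=
        setIntegral_ball_eq_intervalIntegral_circleMap hR (continuous_divergence hF).continuousOn
    _ = ∫ θ in -π..π, radialFlux c F (R, θ) := intervalIntegral_mul_divergence_circleMap R hF
    _ = ∫ θ in 0..2 * π, radialFlux c F (R, θ) := by
        have h := (radialFlux_periodic (c := c) (F := F) R).intervalIntegral_add_eq (-π) 0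
        rwa [zero_add, show -π + 2 * π = π by ring] at h

end Polar

section UnitDisk

lemma dotC_eq_inner (a b : ℂ) : dotC a b = ⟪a, b⟫_ℝ := by
  simp [dotC, mul_comm]

lemma gradC_eq_gradient (u : ℂ → ℝ) : gradC u = ∇ u := by
  funext x
  refine ext_inner_right ℝ fun v => ?_
  have hv : v = v.re • (1 : ℂ) + v.im • Complex.I := by simp
  conv_rhs => rw [inner_gradient_left, hv, map_add, map_smul, map_smul]
  simp [gradC, pd]

lemma gradSq_eq_norm_gradient_sq (u : ℂ → ℝ) (x : ℂ) : gradSq u x = ‖∇ u x‖ ^ 2 := by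
  rw [← gradC_eq_gradient, Complex.sq_norm, Complex.normSq_apply, gradSq, gradC, sq, sq]

lemma nderiv_eq_inner_gradient (u : ℂ → ℝ) (x : ℂ) : nderiv u x = ⟪∇ u x, x⟫_ℝ := by
  rw [← gradC_eq_gradient, ← dotC_eq_inner, nderiv, dotC, gradC]
  ring

lemma divC_eq_divergence (F : ℂ → ℂ) (x : ℂ) : divC F x = divergence F x := by
  simp [divC, divergence, trace_eq_inner_add_inner_mul_I _ (e := 1)]

lemma lap_eq_divergence_gradient {u : ℂ → ℝ} {x : ℂ} (hu : ContDiffAt ℝ 2 u x) :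
    lap u x = divergence (∇ u) x := by
  have hpd (v w : ℂ) : fderiv ℝ (pd u v) x w = ⟪fderiv ℝ (∇ u) x w, v⟫_ℝ := by
    have h : pd u v = fun y => ⟪∇ u y, v⟫_ℝ := by
      funext y
      rw [inner_gradient_left, pd]
    rw [h, fderiv_inner_apply ℝ (differentiableAt_gradient hu) (differentiableAt_const v)]
    simp
  rw [lap, hpd, hpd, divergence, trace_eq_inner_add_inner_mul_I _ norm_one, one_mul]
  rfl

lemma contDiff_Keps {n : WithTop ℕ∞} {K : ℂ → ℝ} (hK : ContDiff ℝ n K) (ε : ℝ) :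
    ContDiff ℝ n (Keps K ε) :=
  (hK.sub contDiff_const).div_const _

lemma bpt_eq_circleMap (θ : ℝ) : bpt θ = circleMap 0 1 θ := by
  simp [bpt, circleMap]

lemma bint_congr {f g : ℂ → ℝ} (h : ∀ x ∈ unitCircle, f x = g x) : bint f = bint g :=
  intervalIntegral.integral_congr fun θ _ =>
    h _ (bpt_eq_circleMap θ ▸ circleMap_mem_sphere 0 zero_le_one θ)

lemma setIntegral_unitDisk_divergence {F : ℂ → ℂ} (hF : ContDiff ℝ 1 F) :
    ∫ x in unitDisk, divergence F x = bint fun x => ⟪F x, x⟫_ℝ := by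
  simpa only [unitDisk, bint, bpt_eq_circleMap]
    using setIntegral_ball_divergence (c := 0) zero_le_one hF

end UnitDisk

lemma fderiv_two_mul_mul_exp_apply {E : Type*} [NormedAddCommGroup E] [NormedSpace ℝ E]
    {k u : E → ℝ} {x : E} (hk : DifferentiableAt ℝ k x) (hu : DifferentiableAt ℝ u x) (v : E) :
    fderiv ℝ (fun y => 2 * k y * Real.exp (u y)) x v =
      2 * Real.exp (u x) * (fderiv ℝ k x v + k x * fderiv ℝ u x v) := by
  rw [((hk.hasFDerivAt.const_mul 2).fun_mul hu.hasFDerivAt.exp).fderiv]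
  simp only [add_apply, smul_apply, smul_eq_mul]
  ring

theorem pohozaev_identity_general {k h κ η u : ℂ → ℝ} {F : ℂ → ℂ} (hk : ContDiff ℝ 1 k)
    (hu : ContDiff ℝ 2 u) (hF : ContDiff ℝ 1 F)
    (hdisk : ∀ x ∈ unitDisk, -lap u x + 2 * κ x = 2 * k x * Real.exp (u x))
    (hcircle : ∀ x ∈ unitCircle, nderiv u x + 2 * η x = 2 * h x * Real.exp (u x / 2)) :
    bint (fun x =>
        2 * k x * Real.exp (u x) * dotC (F x) x
        + (2 * h x * Real.exp (u x / 2) - 2 * η x) * dotC (gradC u x) (F x)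
        - gradSq u x / 2 * dotC (F x) x)
    = ∫ x in unitDisk,
        (2 * κ x * dotC (gradC u x) (F x)
        + 2 * Real.exp (u x) * (dotC (gradC k x) (F x) + k x * divC F x)
        + dotC (fderiv ℝ F x (gradC u x)) (gradC u x)
        - divC F x * gradSq u x / 2) := by
  let φ : ℂ → ℝ := fun x => 2 * k x * Real.exp (u x)
  have hφ : ContDiff ℝ 1 φ := (contDiff_const.mul hk).mul (hu.of_le one_le_two).exp
  simp only [dotC_eq_inner, gradC_eq_gradient, gradSq_eq_norm_gradient_sq, divC_eq_divergence]
  calc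
    _ = bint fun x => ⟪pohozaevField u φ F x, x⟫_ℝ := bint_congr fun x hx => by
      have hnormal : 2 * h x * Real.exp (u x / 2) - 2 * η x = ⟪∇ u x, x⟫_ℝ := by
        rw [← hcircle x hx, nderiv_eq_inner_gradient, add_sub_cancel_right]
      rw [hnormal, pohozaevField, inner_add_left, real_inner_smul_left, real_inner_smul_left]
      ring
    _ = ∫ x in unitDisk, divergence (pohozaevField u φ F) x :=
      (setIntegral_unitDisk_divergence (contDiff_pohozaevField hu hφ hF)).symm
    _ = _ := setIntegral_congr_fun measurableSet_ball fun x hx => by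
      have hlap : divergence (∇ u) x = 2 * κ x - φ x := by
        rw [← lap_eq_divergence_gradient hu.contDiffAt]
        linarith [hdisk x hx]
      have hfderiv_φ : fderiv ℝ φ x (F x) =
          2 * Real.exp (u x) * (fderiv ℝ k x (F x) + k x * fderiv ℝ u x (F x)) :=
        fderiv_two_mul_mul_exp_apply (hk.differentiable one_ne_zero x)
          (hu.differentiable two_ne_zero x) (F x)
      rw [divergence_pohozaevField hu.contDiffAt (hφ.differentiable one_ne_zero x)
        (hF.differentiable one_ne_zero x), hlap, hfderiv_φ, inner_gradient_left,
        inner_gradient_left]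
      ring

/-- Lemma 2.3 (Pohozaev-type identity) for solutions of (P_ε). -/
theorem pohozaev_identity
    (K h : ℂ → ℝ)
    (hK : ContDiff ℝ 2 K)
    (hKneg : ∀ x ∈ closedUnitDisk, K x < 0)
    (hh : ContDiff ℝ 2 (fun θ => h (bpt θ)))
    (ε : ℝ) (hε : -1 < ε)
    (u : ℂ → ℝ) (hu : IsPerturbedSolution K h ε u)
    (F : ℂ → ℂ) (hF : ContDiff ℝ 1 F) :
    bint (fun x =>
        2 * Keps K ε x * Real.exp (u x) * dotC (F x) x
        + (2 * heps h ε x * Real.exp (u x / 2) - 2 * htil ε) * dotC (gradC u x) (F x)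
        - gradSq u x / 2 * dotC (F x) x)
    = ∫ x in unitDisk,
        (2 * Ktil ε * dotC (gradC u x) (F x)
        + 2 * Real.exp (u x) * (dotC (gradC (Keps K ε) x) (F x) + Keps K ε x * divC F x)
        + dotC (fderiv ℝ F x (gradC u x)) (gradC u x)
        - divC F x * gradSq u x / 2) := by
  exact pohozaev_identity_general (κ := fun _ => Ktil ε) (η := fun _ => htil ε)
    (contDiff_Keps (hK.of_le one_le_two) ε) hu.1 hF hu.2.1 hu.2.2

end
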